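/- arXiv:1711.08479 — 2 statements merged into one kernel-verified Lean document; each statement's English description precedes it below -/
import Mathlib

section
/- Let n ≥ 1 and let f, g : ℝⁿ → ℝ be semialgebraic arc-analytic functions. If the zero locus {x ∈ ℝⁿ : g(x) = 0} is nowhere dense in ℝⁿ and there exists a continuous function F : ℝⁿ → ℝ with F(x) = f(x)/g(x) for all x with g(x) ≠ 0, then F is arc-analytic. -/
/-- A function is *arc-analytic* if it is real-analytic along every real-analytic arc
defined on `(-1, 1)`. -/
def ArcAnalytic {E : Type*} [NormedAddCommGroup E] [NormedSpace ℝ E] (f : E → ℝ) : Prop :=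
  ∀ γ : ℝ → E, AnalyticOnNhd ℝ γ (Set.Ioo (-1) 1) →
    AnalyticOnNhd ℝ (f ∘ γ) (Set.Ioo (-1) 1)

/-- A set `S ⊆ ℝⁿ` is *semialgebraic* if it is a finite union of sets of the form
`{x : p x = 0, q₁ x > 0, …, q_r x > 0}` for real polynomials `p, q₁, …, q_r`. -/
def IsSemialgebraic {n : ℕ} (S : Set (Fin n → ℝ)) : Prop :=
  ∃ (k : ℕ) (p : Fin k → MvPolynomial (Fin n) ℝ) (r : Fin k → ℕ)
    (q : (i : Fin k) → Fin (r i) → MvPolynomial (Fin n) ℝ),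
    S = ⋃ i, {x | MvPolynomial.eval x (p i) = 0 ∧
        ∀ j, 0 < MvPolynomial.eval x (q i j)}

/-- A function `f : ℝⁿ → ℝ` is *semialgebraic* if its graph is a semialgebraic subset
of `ℝⁿ⁺¹`. -/
def IsSemialgebraicFun {n : ℕ} (f : (Fin n → ℝ) → ℝ) : Prop :=
  IsSemialgebraic {v : Fin (n + 1) → ℝ | v (Fin.last n) = f (Fin.init v)}


section
open Filter Topology Asymptotics Polynomial

def AP (Q : ℝ → ℝ[X]) : Prop :=
  (∃ d, ∀ t, (Q t).natDegree ≤ d) ∧ ∀ i, AnalyticAt ℝ (fun t => (Q t).coeff i) 0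

namespace AP

lemma add {P Q : ℝ → ℝ[X]} (hP : AP P) (hQ : AP Q) : AP (fun t => P t + Q t) := by
  obtain ⟨⟨d, hd⟩, hP⟩ := hP
  obtain ⟨⟨e, he⟩, hQ⟩ := hQ
  refine ⟨⟨max d e, fun t => (natDegree_add_le _ _).trans (max_le_max (hd t) (he t))⟩, fun i => ?_⟩
  simp only [coeff_add]
  exact (hP i).add (hQ i)

lemma mul {P Q : ℝ → ℝ[X]} (hP : AP P) (hQ : AP Q) : AP (fun t => P t * Q t) := by
  obtain ⟨⟨d, hd⟩, hP⟩ := hP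
  obtain ⟨⟨e, he⟩, hQ⟩ := hQ
  refine ⟨⟨d + e, fun t => natDegree_mul_le.trans (add_le_add (hd t) (he t))⟩, fun i => ?_⟩
  simp only [coeff_mul]
  exact Finset.analyticAt_fun_sum _ fun j _ => (hP _).mul (hQ _)

lemma const (P : ℝ[X]) : AP (fun _ => P) :=
  ⟨⟨_, fun _ => le_rfl⟩, fun _ => analyticAt_const⟩

lemma C {a : ℝ → ℝ} (ha : AnalyticAt ℝ a 0) : AP (fun t => Polynomial.C (a t)) := by
  refine ⟨⟨0, fun t => by simp⟩, fun i => ?_⟩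
  by_cases h : i = 0
  · simpa [coeff_C, h] using ha
  · simpa [coeff_C, h] using analyticAt_const

lemma sum {ι : Type*} (s : Finset ι) {P : ι → ℝ → ℝ[X]} (hP : ∀ i ∈ s, AP (P i)) :
    AP (fun t => ∑ i ∈ s, P i t) := by
  classical
  induction s using Finset.induction_on with
  | empty => simpa using const 0
  | insert a s ha ih =>
    simp only [Finset.sum_insert ha]
    exact (hP a (by simp)).add (ih fun i hi => hP i (by simp [hi]))

lemma pow {P : ℝ → ℝ[X]} (hP : AP P) (n : ℕ) : AP (fun t => P t ^ n) := by
  induction n with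
  | zero => simpa using const 1
  | succ n ih => simpa only [pow_succ] using ih.mul hP

lemma derivative {P : ℝ → ℝ[X]} (hP : AP P) : AP (fun t => Polynomial.derivative (P t)) := by
  obtain ⟨⟨d, hd⟩, hP⟩ := hP
  refine ⟨⟨d, fun t => (natDegree_derivative_le _).trans ((Nat.sub_le _ _).trans (hd t))⟩,
    fun i => ?_⟩
  simp only [coeff_derivative]
  exact (hP _).mul analyticAt_const

lemma iterate_derivative {P : ℝ → ℝ[X]} (hP : AP P) (k : ℕ) :
    AP (fun t => Polynomial.derivative^[k] (P t)) := by
  induction k with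
  | zero => simpa using hP
  | succ n ih => simpa only [Function.iterate_succ_apply'] using ih.derivative

lemma divX {P : ℝ → ℝ[X]} (hP : AP P) : AP (fun t => Polynomial.divX (P t)) := by
  obtain ⟨⟨d, hd⟩, hP⟩ := hP
  refine ⟨⟨d, fun t => ?_⟩, fun i => ?_⟩
  · rw [natDegree_divX_eq_natDegree_tsub_one]
    exact (Nat.sub_le _ _).trans (hd t)
  · simpa only [coeff_divX] using hP _

lemma taylor {P : ℝ → ℝ[X]} (hP : AP P) {p : ℝ → ℝ} (hp : AnalyticAt ℝ p 0) :
    AP (fun t => Polynomial.taylor (p t) (P t)) := by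
  obtain ⟨⟨d, hd⟩, hP⟩ := hP
  have : (fun t => Polynomial.taylor (p t) (P t)) = fun t => ∑ i ∈ Finset.range (d + 1),
      Polynomial.C ((P t).coeff i) * (X + Polynomial.C (p t)) ^ i := by
    funext t
    conv_lhs => rw [(P t).as_sum_range' (d + 1) (Nat.lt_succ_of_le (hd t))]
    simp
  rw [this]
  exact sum _ fun i _ => (AP.C (hP i)).mul (((const X).add (AP.C hp)).pow i)

lemma analyticAt_eval₂ {P : ℝ → ℝ[X]} (hP : AP P) (y : ℝ) :
    AnalyticAt ℝ (fun x : ℝ × ℝ => (P x.1).eval x.2) (0, y) := by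
  obtain ⟨⟨d, hd⟩, hP⟩ := hP
  have : (fun x : ℝ × ℝ => (P x.1).eval x.2) = fun x => ∑ i ∈ Finset.range (d + 1),
      (P x.1).coeff i * x.2 ^ i := by
    funext x
    rw [eval_eq_sum_range' (Nat.lt_succ_of_le (hd _))]
  rw [this]
  refine Finset.analyticAt_fun_sum _ fun i _ => ?_
  refine AnalyticAt.mul ?_ (analyticAt_snd.pow i)
  exact AnalyticAt.fun_comp (f := fun x : ℝ × ℝ => x.1) (g := fun t => (P t).coeff i) (hP i)
    analyticAt_fst

lemma analyticAt_eval {P : ℝ → ℝ[X]} (hP : AP P) {y : ℝ → ℝ} (hy : AnalyticAt ℝ y 0) :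
    AnalyticAt ℝ (fun t => (P t).eval (y t)) 0 := by
  exact AnalyticAt.fun_comp (f := fun t : ℝ => (t, y t))
    (g := fun x : ℝ × ℝ => (P x.1).eval x.2) (hP.analyticAt_eval₂ (y 0)) (AnalyticAt.prod analyticAt_id hy)

/-- evaluation along something convergent is bounded -/
lemma bdd_eval {P : ℝ → ℝ[X]} (hP : AP P) {α : Type*} {l : Filter α} {s y : α → ℝ} {y0 : ℝ}
    (hs : Tendsto s l (𝓝 0)) (hy : Tendsto y l (𝓝 y0)) :
    (fun a => (P (s a)).eval (y a)) =O[l] (fun _ => (1 : ℝ)) := by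
  have := (hP.analyticAt_eval₂ y0).continuousAt.tendsto.comp (hs.prodMk_nhds hy)
  exact this.isBigO_one ℝ

/-- an `AP` that is not eventually zero has a coefficient that is not eventually zero -/
lemma exists_factor {P : ℝ → ℝ[X]} (hP : AP P) (h0 : ¬ ∀ᶠ t in 𝓝 0, P t = 0) :
    ∃ (m : ℕ) (R : ℝ → ℝ[X]), AP R ∧ R 0 ≠ 0 ∧ ∀ᶠ t in 𝓝 0, P t = Polynomial.C (t ^ m) * R t := by
  obtain ⟨⟨d, hd⟩, hP⟩ := hP
  obtain ⟨i0, hi0, hmin⟩ := Finset.exists_min_image (Finset.range (d + 1))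
    (fun i => analyticOrderAt (fun t => (P t).coeff i) 0) ⟨0, by simp⟩
  have hne : analyticOrderAt (fun t => (P t).coeff i0) 0 ≠ ⊤ := by
    intro htop
    apply h0
    have : ∀ i ∈ Finset.range (d + 1), ∀ᶠ t in 𝓝 (0 : ℝ), (P t).coeff i = 0 := by
      intro i hi
      rw [← analyticOrderAt_eq_top]
      exact top_le_iff.1 (htop ▸ hmin i hi)
    have := (Finset.eventually_all _).2 this
    filter_upwards [this] with t ht
    ext i
    by_cases hi : i < d + 1
    · simpa using ht i (by simpa using hi)
    · simpa using coeff_eq_zero_of_natDegree_lt (by have := hd t; omega)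
  obtain ⟨m, hm⟩ := ENat.ne_top_iff_exists.1 hne
  have key : ∀ i, ∃ g : ℝ → ℝ, AnalyticAt ℝ g 0 ∧ (i ∈ Finset.range (d + 1) →
      ∀ᶠ t in 𝓝 (0 : ℝ), (P t).coeff i = t ^ m * g t) := by
    intro i
    by_cases hi : i ∈ Finset.range (d + 1)
    · obtain ⟨g, hg, h⟩ := (natCast_le_analyticOrderAt (hP i) (n := m)).1 (hm ▸ hmin i hi)
      exact ⟨g, hg, fun _ => by simpa using h⟩
    · exact ⟨0, analyticAt_const, fun h => absurd h hi⟩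
  choose g hg hgP using key
  obtain ⟨g', hg', hg'0, hg'P⟩ := (hP i0).analyticOrderAt_eq_natCast.1 hm.symm
  have hgg : g i0 0 ≠ 0 := by
    have h1 : ∀ᶠ t in 𝓝[≠] (0 : ℝ), g i0 t = g' t := by
      filter_upwards [(hgP i0 hi0).filter_mono nhdsWithin_le_nhds,
        hg'P.filter_mono nhdsWithin_le_nhds, self_mem_nhdsWithin] with t h1 h2 h3
      have h3 : t ≠ 0 := h3
      rw [h1] at h2
      simpa [h3] using h2
    have := ((hg i0).continuousAt.eventuallyEq_nhds_iff_eventuallyEq_nhdsNE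
      hg'.continuousAt).1 h1
    rw [this.eq_of_nhds]
    exact hg'0
  refine ⟨m, fun t => ∑ i ∈ Finset.range (d + 1), Polynomial.C (g i t) * X ^ i,
    sum _ fun i _ => (AP.C (hg i)).mul (const _), fun h => hgg ?_, ?_⟩
  · have := congrArg (fun p => p.coeff i0) h
    simpa [coeff_X_pow, show i0 < d + 1 by simpa using hi0] using this
  · have := (Finset.eventually_all _).2 hgP
    filter_upwards [this] with t ht
    rw [(P t).as_sum_range' (d + 1) (Nat.lt_succ_of_le (hd t)), Finset.mul_sum]
    refine Finset.sum_congr rfl fun i hi => ?_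
    rw [ht i hi, ← C_mul_X_pow_eq_monomial]
    simp [mul_assoc]

end AP

end

section
open Filter Topology Asymptotics Polynomial

def Flat (φ : ℝ → ℝ) : Prop := ∀ N : ℕ, φ =O[𝓝 0] (fun t : ℝ => t ^ N)

lemma pow_isBigO_pow' {m n : ℕ} (h : m ≤ n) :
    (fun t : ℝ => t ^ n) =O[𝓝 0] (fun t : ℝ => t ^ m) := by
  obtain ⟨k, rfl⟩ := Nat.exists_eq_add_of_le h
  have h1 : (fun t : ℝ => t ^ k) =O[𝓝 0] (fun _ => (1 : ℝ)) :=
    (continuous_pow k).continuousAt.tendsto.isBigO_one ℝ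
  simpa [pow_add] using (isBigO_refl (fun t : ℝ => t ^ m) (𝓝 0)).mul h1

lemma factor_of_isBigO {h : ℝ → ℝ} (hh : AnalyticAt ℝ h 0) {N : ℕ}
    (hO : h =O[𝓝 0] (fun t : ℝ => t ^ N)) :
    ∃ k, AnalyticAt ℝ k 0 ∧ ∀ᶠ t in 𝓝 (0 : ℝ), h t = t ^ N * k t := by
  suffices (N : ℕ∞) ≤ analyticOrderAt h 0 by
    simpa using (natCast_le_analyticOrderAt hh).1 this
  by_contra hlt
  push Not at hlt
  obtain ⟨n, hn⟩ := ENat.ne_top_iff_exists.1 (ne_top_of_lt hlt)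
  rw [← hn] at hlt
  have hnN : n < N := by exact_mod_cast hlt
  obtain ⟨g, hg, hg0, hgh⟩ := hh.analyticOrderAt_eq_natCast.1 hn.symm
  obtain ⟨k, rfl⟩ := Nat.exists_eq_add_of_lt hnN
  have h1 : g =O[𝓝[≠] 0] (fun t : ℝ => t ^ (k + 1)) := by
    obtain ⟨c, hc⟩ := hO.bound
    refine IsBigO.of_bound c ?_
    filter_upwards [hc.filter_mono nhdsWithin_le_nhds, hgh.filter_mono nhdsWithin_le_nhds,
      self_mem_nhdsWithin] with t h1 h2 h3
    have h3 : 0 < |t| := abs_pos.2 h3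
    rw [h2] at h1
    simp only [sub_zero, smul_eq_mul, norm_mul, norm_pow, Real.norm_eq_abs] at h1 ⊢
    have h4 : 0 < |t| ^ n := by positivity
    have : |t| ^ n * |g t| ≤ |t| ^ n * (c * |t| ^ (k + 1)) := by
      calc _ ≤ _ := h1
        _ = _ := by ring
    exact le_of_mul_le_mul_left this h4
  have h2 : Tendsto g (𝓝[≠] 0) (𝓝 0) := by
    refine h1.trans_tendsto ?_
    have : Tendsto (fun t : ℝ => t ^ (k + 1)) (𝓝 0) (𝓝 (0 ^ (k+1))) :=
      (continuous_pow (k + 1)).continuousAt.tendsto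
    simp only [ne_eq, Nat.add_eq_zero_iff, one_ne_zero, and_false, not_false_eq_true, zero_pow]
      at this
    exact this.mono_left nhdsWithin_le_nhds
  exact hg0 (tendsto_nhds_unique (hg.continuousAt.tendsto.mono_left nhdsWithin_le_nhds) h2)

lemma order_cases {h : ℝ → ℝ} (hh : AnalyticAt ℝ h 0) : (∀ᶠ t in 𝓝 (0:ℝ), h t = 0) ∨
    ∃ (m : ℕ) (u : ℝ → ℝ), AnalyticAt ℝ u 0 ∧ u 0 ≠ 0 ∧ ∀ᶠ t in 𝓝 (0:ℝ), h t = t ^ m * u t := by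
  by_cases ht : analyticOrderAt h 0 = ⊤
  · exact Or.inl (analyticOrderAt_eq_top.1 ht)
  · obtain ⟨n, hn⟩ := ENat.ne_top_iff_exists.1 ht
    right
    obtain ⟨g, hg, hg0, hgh⟩ := hh.analyticOrderAt_eq_natCast.1 hn.symm
    exact ⟨n, g, hg, hg0, by simpa using hgh⟩

lemma not_isBigO_of_factor {h u : ℝ → ℝ} {m : ℕ} (hu : AnalyticAt ℝ u 0) (hu0 : u 0 ≠ 0)
    (hh : ∀ᶠ t in 𝓝 (0 : ℝ), h t = t ^ m * u t) :
    ∃ c > 0, ∀ᶠ t in 𝓝 (0 : ℝ), c * |t| ^ m ≤ |h t| := by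
  refine ⟨|u 0| / 2, by positivity, ?_⟩
  have : ∀ᶠ t in 𝓝 (0 : ℝ), |u 0| / 2 < |u t| :=
    hu.continuousAt.abs.eventually (lt_mem_nhds (half_lt_self (abs_pos.2 hu0)))
  filter_upwards [hh, this] with t h1 h2
  rw [h1, abs_mul, abs_pow, mul_comm]
  gcongr

lemma Flat.eventually_zero {h : ℝ → ℝ} (hf : Flat h) (hh : AnalyticAt ℝ h 0) :
    ∀ᶠ t in 𝓝 (0 : ℝ), h t = 0 := by
  rw [← analyticOrderAt_eq_top]
  by_contra ht
  obtain ⟨n, hn⟩ := ENat.ne_top_iff_exists.1 ht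
  have := factor_of_isBigO hh (hf (n + 1))
  have h2 := (natCast_le_analyticOrderAt hh (n := n + 1)).2 (by simpa using this)
  rw [← hn] at h2
  have : n + 1 ≤ n := by exact_mod_cast h2
  omega

lemma tendsto_zero_of_isBigO_pow {w : ℝ → ℝ} {N : ℕ} (hN : 0 < N)
    (hw : w =O[𝓝 0] (fun t : ℝ => t ^ N)) : Tendsto w (𝓝 0) (𝓝 0) := by
  refine hw.trans_tendsto ?_
  have : Tendsto (fun t : ℝ => t ^ N) (𝓝 0) (𝓝 (0 ^ N)) :=
    (continuous_pow N).continuousAt.tendsto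
  simpa [hN.ne'] using this

/-- Difference of values of `AP`. -/
lemma AP.eval_sub {P : ℝ → ℝ[X]} (hP : AP P) {p φ : ℝ → ℝ} (hp : AnalyticAt ℝ p 0) {N : ℕ}
    (hN : 0 < N) (hw : (fun t => φ t - p t) =O[𝓝 0] (fun t : ℝ => t ^ N)) :
    (fun t => (P t).eval (φ t) - (P t).eval (p t)) =O[𝓝 0] (fun t : ℝ => t ^ N) := by
  have h1 := (hP.taylor hp).divX.bdd_eval tendsto_id (tendsto_zero_of_isBigO_pow hN hw)
  have h2 := hw.mul h1
  simp only [mul_one, id] at h2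
  refine h2.congr_left fun t => ?_
  have h3 := congrArg (fun q => q.eval (φ t - p t)) (divX_mul_X_add (Polynomial.taylor (p t) (P t)))
  simp only [eval_add, eval_mul, eval_X, eval_C, taylor_coeff_zero, taylor_eval,
    sub_add_cancel] at h3
  linarith

lemma lower_bound_perturb {h e : ℝ → ℝ} {m : ℕ} {c : ℝ} (hc : 0 < c)
    (hh : ∀ᶠ t in 𝓝 (0 : ℝ), c * |t| ^ m ≤ |h t|)
    (he : e =O[𝓝 0] (fun t : ℝ => t ^ (m + 1))) :
    ∀ᶠ t in 𝓝 (0 : ℝ), c / 2 * |t| ^ m ≤ |h t + e t| := by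
  obtain ⟨K, hK0, hK⟩ := he.exists_pos
  have hs : ∀ᶠ t in 𝓝 (0 : ℝ), K * |t| < c / 2 := by
    have : Tendsto (fun t : ℝ => K * |t|) (𝓝 0) (𝓝 (K * |0|)) :=
      (continuous_const.mul continuous_abs).continuousAt.tendsto
    refine this.eventually (gt_mem_nhds ?_)
    simp [hc]
  filter_upwards [hh, hK.bound, hs] with t h1 h2 h3
  simp only [norm_pow, Real.norm_eq_abs] at h2
  have h4 : |e t| ≤ c / 2 * |t| ^ m := by
    calc |e t| ≤ K * |t| ^ (m + 1) := h2
      _ = (K * |t|) * |t| ^ m := by ring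
      _ ≤ _ := by gcongr
  have h5 : |h t| ≤ |h t + e t| + |e t| := by
    calc |h t| = |(h t + e t) - e t| := by ring_nf
      _ ≤ _ := abs_sub _ _
  linarith

lemma eval_eq_divX (q : ℝ[X]) (y : ℝ) : q.eval y = q.coeff 0 + y * (divX q).eval y := by
  have h3 := congrArg (fun q => q.eval y) (divX_mul_X_add q)
  simp only [eval_add, eval_mul, eval_X, eval_C] at h3
  linarith

lemma Flat.tendsto {w : ℝ → ℝ} (hw : Flat w) : Tendsto w (𝓝 0) (𝓝 0) :=
  tendsto_zero_of_isBigO_pow one_pos (hw 1)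

lemma Flat.zero {w : ℝ → ℝ} (hw : Flat w) : w 0 = 0 := by
  obtain ⟨c, hc⟩ := (hw 1).bound
  simpa using hc.self_of_nhds

lemma eventually_zero_of_flat_aux {b : ℝ → ℝ[X]} (hb : AP b)
    (hne : ¬ ∀ᶠ t in 𝓝 0, (b t).coeff 0 = 0) {w : ℝ → ℝ} (hw : Flat w)
    (hev : ∀ᶠ t in 𝓝 0, w t * (b t).eval (w t) = 0) : ∀ᶠ t in 𝓝 0, w t = 0 := by
  rcases order_cases (hb.2 0) with h0 | ⟨m, u, hu, hu0, hh⟩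
  · exact absurd h0 hne
  obtain ⟨c, hc, hlow⟩ := not_isBigO_of_factor hu hu0 hh
  have h1 := (hw (m + 1)).mul (hb.divX.bdd_eval tendsto_id hw.tendsto)
  simp only [mul_one, id] at h1
  filter_upwards [lower_bound_perturb hc hlow h1, hev] with t h2 h3
  rw [← eval_eq_divX] at h2
  by_cases ht : t = 0
  · rw [ht]; exact hw.zero
  rcases mul_eq_zero.1 h3 with h | h
  · exact h
  · rw [h] at h2
    have : 0 < c / 2 * |t| ^ m := by have := abs_pos.2 ht; positivity
    simp at h2
    linarith

lemma eventually_zero_of_flat (d : ℕ) : ∀ (b : ℝ → ℝ[X]), AP b → (∀ t, (b t).natDegree ≤ d) →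
    (¬ ∀ᶠ t in 𝓝 0, b t = 0) → ∀ w : ℝ → ℝ, Flat w →
    (∀ᶠ t in 𝓝 0, w t * (b t).eval (w t) = 0) → ∀ᶠ t in 𝓝 0, w t = 0 := by
  induction d with
  | zero =>
    intro b hb hd hne w hw hev
    refine eventually_zero_of_flat_aux hb (fun h0 => hne ?_) hw hev
    filter_upwards [h0] with t ht
    rw [eq_C_of_natDegree_le_zero (hd t), ht, map_zero]
  | succ d ih =>
    intro b hb hd hne w hw hev
    by_cases h0 : ∀ᶠ t in 𝓝 0, (b t).coeff 0 = 0
    · refine ih (fun t => divX (b t)) hb.divX (fun t => ?_) (fun h => hne ?_) w hw ?_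
      · rw [natDegree_divX_eq_natDegree_tsub_one]
        have := hd t
        omega
      · filter_upwards [h, h0] with t h1 h2
        rw [← divX_mul_X_add (b t), h1, h2]
        simp
      · filter_upwards [h0, hev] with t h1 h2
        rw [eval_eq_divX, h1, zero_add] at h2
        rcases mul_eq_zero.1 h2 with h | h
        · simp [h]
        · exact h
    · exact eventually_zero_of_flat_aux hb h0 hw hev

lemma implicit {K : ℝ × ℝ → ℝ} (hK : AnalyticAt ℝ K (0, 0)) {c : ℝ} (hc : c ≠ 0)
    (h0 : ∀ z, K (0, z) = c * z) :
    ∃ ζ : ℝ → ℝ, AnalyticAt ℝ ζ 0 ∧ ζ 0 = 0 ∧ ∀ᶠ t in 𝓝 (0 : ℝ), K (t, ζ t) = 0 := by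
  have cdf : ContDiffAt ℝ ⊤ K (0, 0) := hK.contDiffAt
  have hinv : (fderiv ℝ K (0, 0) ∘L .inr ℝ ℝ ℝ).IsInvertible := by
    refine ⟨ContinuousLinearEquiv.unitsEquivAut ℝ (Units.mk0 c hc), ?_⟩
    have h1 : HasFDerivAt (fun z : ℝ => K (0, z)) (fderiv ℝ K (0, 0) ∘L .inr ℝ ℝ ℝ) 0 :=
      HasFDerivAt.comp (f := fun z : ℝ => ((0 : ℝ), z)) (0 : ℝ)
        hK.differentiableAt.hasFDerivAt (hasFDerivAt_prodMk_right (𝕜 := ℝ) (0 : ℝ) (0 : ℝ))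
    have h2 : HasDerivAt (fun z : ℝ => K (0, z)) c 0 := by
      simp only [h0]
      simpa using (hasDerivAt_id (0 : ℝ)).const_mul c
    rw [h1.unique h2.hasFDerivAt]
    ext
    simp
  have hn : (⊤ : WithTop ℕ∞) ≠ 0 := by simp
  refine ⟨cdf.implicitFunction hn hinv, ?_, cdf.implicitFunction_apply_self hn hinv, ?_⟩
  · have := cdf.contDiffAt_implicitFunction hn hinv
    exact this.analyticAt
  · have := cdf.eventually_apply_implicitFunction hn hinv
    simpa [h0] using this

end

section
open Filter Topology Asymptotics Polynomial

/-- Minimal flat relation. -/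
lemma exists_min_flat {Q0 : ℝ → ℝ[X]} (hQ0 : AP Q0) (hne0 : ¬ ∀ᶠ t in 𝓝 0, Q0 t = 0)
    {φ : ℝ → ℝ} (hφ : Flat (fun t => (Q0 t).eval (φ t))) :
    ∃ Q : ℝ → ℝ[X], AP Q ∧ Flat (fun t => (Q t).eval (φ t)) ∧
      ¬ Flat (fun t => (derivative (Q t)).eval (φ t)) := by
  classical
  have hex : ∃ d : ℕ, ∃ Q : ℝ → ℝ[X], AP Q ∧ (∀ t, (Q t).natDegree ≤ d) ∧
      (¬ ∀ᶠ t in 𝓝 0, Q t = 0) ∧ Flat (fun t => (Q t).eval (φ t)) := by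
    obtain ⟨d, hd⟩ := hQ0.1
    exact ⟨d, Q0, hQ0, hd, hne0, hφ⟩
  obtain ⟨Q, hQ, hd, hne, hfl⟩ := Nat.find_spec hex
  have hder : ¬ ∀ᶠ t in 𝓝 0, derivative (Q t) = 0 := by
    intro h
    have h1 : ∀ᶠ t in 𝓝 0, Q t = C ((Q t).coeff 0) := by
      filter_upwards [h] with t ht
      exact eq_C_of_derivative_eq_zero ht
    have h2 : Flat (fun t => (Q t).coeff 0) := by
      intro N
      refine (hfl N).congr' ?_ EventuallyEq.rfl
      filter_upwards [h1] with t ht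
      rw [ht]; simp
    apply hne
    filter_upwards [h1, h2.eventually_zero (hQ.2 0)] with t h3 h4
    rw [h3, h4, map_zero]
  refine ⟨Q, hQ, hfl, fun hflat => ?_⟩
  have hpos : Nat.find hex ≠ 0 := by
    intro h0
    apply hder
    refine Eventually.of_forall fun t => ?_
    have := hd t
    rw [h0] at this
    rw [eq_C_of_natDegree_le_zero this, derivative_C]
  refine Nat.find_min hex (m := Nat.find hex - 1) (by omega)
    ⟨fun t => derivative (Q t), hQ.derivative, fun t => ?_, hder, hflat⟩
  exact (natDegree_derivative_le _).trans (Nat.sub_le_sub_right (hd t) 1)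

lemma analytic_of_approx {Q0 : ℝ → ℝ[X]} (hQ0 : AP Q0) (hne0 : ¬ ∀ᶠ t in 𝓝 0, Q0 t = 0)
    {φ : ℝ → ℝ} (hφ : ∀ᶠ t in 𝓝 0, (Q0 t).eval (φ t) = 0)
    (happ : ∀ N : ℕ, ∃ p : ℝ → ℝ, AnalyticAt ℝ p 0 ∧
      (fun t => φ t - p t) =O[𝓝 0] (fun t : ℝ => t ^ N)) : AnalyticAt ℝ φ 0 := by
  have hfl0 : Flat (fun t => (Q0 t).eval (φ t)) := by
    intro N
    refine (isBigO_zero _ _).congr' (f₁ := fun _ => (0 : ℝ)) ?_ EventuallyEq.rfl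
    filter_upwards [hφ] with t ht
    rw [ht]
  obtain ⟨Q, hQ, hfl, hnfl⟩ := exists_min_flat hQ0 hne0 hfl0
  obtain ⟨M, hM⟩ := not_forall.1 hnfl
  obtain ⟨p, hp, hpφ⟩ := happ (2 * M + 2)
  -- values at `p`
  have hq0 : (fun t => (Q t).eval (p t)) =O[𝓝 0] (fun t : ℝ => t ^ (2 * M + 2)) := by
    have := (hfl (2 * M + 2)).sub (hQ.eval_sub hp (by omega) hpφ)
    simpa using this
  have hd1 := hQ.derivative.eval_sub hp (by omega) hpφ
  have hq1 : ¬ (fun t => (derivative (Q t)).eval (p t)) =O[𝓝 0] (fun t : ℝ => t ^ M) := by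
    intro h
    apply hM
    have := (hd1.trans (pow_isBigO_pow' (show M ≤ 2 * M + 2 by omega))).add h
    simpa using this
  obtain ⟨m, u, hu, hu0, hqu⟩ : ∃ (m : ℕ) (u : ℝ → ℝ), AnalyticAt ℝ u 0 ∧ u 0 ≠ 0 ∧
      ∀ᶠ t in 𝓝 (0:ℝ), (derivative (Q t)).eval (p t) = t ^ m * u t := by
    rcases order_cases (hQ.derivative.analyticAt_eval hp) with h | h
    · exfalso
      apply hq1
      refine (isBigO_zero _ _).congr' (f₁ := fun _ => (0 : ℝ)) ?_ EventuallyEq.rfl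
      filter_upwards [h] with t ht
      rw [ht]
    · exact h
  have hmM : m < M := by
    by_contra hle
    apply hq1
    have h1 : (fun t : ℝ => t ^ m * u t) =O[𝓝 0] (fun t : ℝ => t ^ m * 1) :=
      (isBigO_refl _ _).mul (hu.continuousAt.tendsto.isBigO_one ℝ)
    simp only [mul_one] at h1
    refine (h1.trans (pow_isBigO_pow' (not_lt.1 hle))).congr' ?_ EventuallyEq.rfl
    filter_upwards [hqu] with t ht
    rw [ht]
  obtain ⟨e, he, hqe⟩ := factor_of_isBigO (hQ.analyticAt_eval hp) hq0
  obtain ⟨r, hr⟩ : ∃ r, 2 * M + 2 = (2 * m + 1) + (r + 1) := ⟨2 * M - 2 * m, by omega⟩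
  -- the implicit equation
  set H : ℝ → ℝ[X] := fun t => divX (divX (taylor (p t) (Q t))) with hH
  have hHAP : AP H := (hQ.taylor hp).divX.divX
  set K : ℝ × ℝ → ℝ := fun x => x.1 ^ (r + 1) * e x.1 + u x.1 * x.2 +
    x.1 * x.2 ^ 2 * (H x.1).eval (x.1 ^ (m + 1) * x.2) with hKdef
  have hcomp1 : ∀ {a : ℝ → ℝ}, AnalyticAt ℝ a 0 →
      AnalyticAt ℝ (fun x : ℝ × ℝ => a x.1) (0, 0) := fun {a} ha =>
    AnalyticAt.fun_comp (f := fun x : ℝ × ℝ => x.1) (g := a) ha analyticAt_fst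
  have hK : AnalyticAt ℝ K (0, 0) := by
    have hH2 : AnalyticAt ℝ (fun x : ℝ × ℝ => (H x.1).eval (x.1 ^ (m + 1) * x.2)) (0, 0) := by
      refine AnalyticAt.fun_comp (f := fun x : ℝ × ℝ => (x.1, x.1 ^ (m + 1) * x.2))
        (g := fun x : ℝ × ℝ => (H x.1).eval x.2) ?_
        (analyticAt_fst.prod ((analyticAt_fst.pow _).mul analyticAt_snd))
      simpa using hHAP.analyticAt_eval₂ 0
    exact (((analyticAt_fst.pow _).mul (hcomp1 he)).add ((hcomp1 hu).mul analyticAt_snd)).add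
      ((analyticAt_fst.mul (analyticAt_snd.pow 2)).mul hH2)
  obtain ⟨ζ, hζ, hζ0, hKζ⟩ := implicit hK hu0 (fun z => by simp [hKdef])
  -- the analytic solution
  set ψ : ℝ → ℝ := fun t => p t + t ^ (m + 1) * ζ t with hψdef
  have hψ : AnalyticAt ℝ ψ 0 := hp.add ((analyticAt_id.pow _).mul hζ)
  have hQψ : ∀ᶠ t in 𝓝 0, (Q t).eval (ψ t) = 0 := by
    filter_upwards [hKζ, hqu, hqe] with t h1 h2 h3
    have h4 : (Q t).eval (ψ t) = (taylor (p t) (Q t)).eval (t ^ (m + 1) * ζ t) := by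
      rw [taylor_eval, add_comm (t ^ (m + 1) * ζ t)]
    rw [h4, eval_eq_divX, eval_eq_divX (divX _), coeff_divX, taylor_coeff_zero, zero_add,
      taylor_coeff_one, h2, h3, hr]
    simp only [hKdef, hH] at h1
    linear_combination t ^ (2 * m + 1) * h1
  have hζO : ζ =O[𝓝 0] (fun t : ℝ => t ^ 1) := by
    have := hζ.differentiableAt.isBigO_sub
    simpa [hζ0] using this
  have hψp : (fun t => ψ t - p t) =O[𝓝 0] (fun t : ℝ => t ^ (m + 2)) := by
    have := (isBigO_refl (fun t : ℝ => t ^ (m + 1)) (𝓝 0)).mul hζO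
    refine this.congr (fun t => by simp [hψdef]) (fun t => by ring)
  have hφψ : (fun t => φ t - ψ t) =O[𝓝 0] (fun t : ℝ => t ^ (m + 2)) := by
    have := (hpφ.trans (pow_isBigO_pow' (show m + 2 ≤ 2 * M + 2 by omega))).sub hψp
    simpa using this
  have hflat : Flat (fun t => φ t - ψ t) := by
    obtain ⟨c, hc, hlow⟩ := not_isBigO_of_factor hu hu0 hqu
    have h1 := (hQ.derivative.eval_sub hp (by omega) hψp).trans
      (pow_isBigO_pow' (show m + 1 ≤ m + 2 by omega))
    have h2 := lower_bound_perturb hc hlow h1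
    simp only [add_sub_cancel] at h2
    have h3 := (hφψ.trans (pow_isBigO_pow' (show m + 1 ≤ m + 2 by omega))).mul
      ((hQ.taylor hψ).divX.divX.bdd_eval tendsto_id (tendsto_zero_of_isBigO_pow (by omega) hφψ))
    simp only [mul_one, id] at h3
    have h4 := lower_bound_perturb (half_pos hc) h2 h3
    intro N
    obtain ⟨B, hB0, hB⟩ := (hfl (N + m)).exists_pos
    replace hB := hB.bound
    refine IsBigO.of_bound (B / (c / 2 / 2)) ?_
    have hz : φ 0 - ψ 0 = 0 := by
      obtain ⟨c, hc⟩ := hφψ.bound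
      simpa [sub_eq_zero] using hc.self_of_nhds
    filter_upwards [h4, hB, hQψ] with t h5 h6 h7
    by_cases ht : t = 0
    · subst ht
      rw [hz]
      simp only [norm_zero]
      positivity
    · have htp := abs_pos.2 ht
      have h8 : (Q t).eval (φ t) = (φ t - ψ t) * ((derivative (Q t)).eval (ψ t) +
          (φ t - ψ t) * (divX (divX (taylor (ψ t) (Q t)))).eval (φ t - ψ t)) := by
        have : (Q t).eval (φ t) = (taylor (ψ t) (Q t)).eval (φ t - ψ t) := by
          rw [taylor_eval, sub_add_cancel]
        rw [this, eval_eq_divX, eval_eq_divX (divX _), coeff_divX, taylor_coeff_zero, zero_add,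
          taylor_coeff_one, h7, zero_add]
      rw [h8, norm_mul, norm_pow, Real.norm_eq_abs, Real.norm_eq_abs, Real.norm_eq_abs] at h6
      rw [norm_pow, Real.norm_eq_abs, Real.norm_eq_abs, div_mul_eq_mul_div,
        le_div_iff₀ (by positivity)]
      have h9 : (|φ t - ψ t| * (c / 2 / 2)) * |t| ^ m ≤ (B * |t| ^ N) * |t| ^ m := by
        calc _ = |φ t - ψ t| * (c / 2 / 2 * |t| ^ m) := by ring
          _ ≤ _ := mul_le_mul_of_nonneg_left h5 (abs_nonneg _)
          _ ≤ _ := h6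
          _ = _ := by ring
      exact le_of_mul_le_mul_right h9 (by positivity)
  -- equality
  obtain ⟨d, hd⟩ := hQ0.1
  have hfin := eventually_zero_of_flat d (fun t => taylor (ψ t) (Q0 t)) (hQ0.taylor hψ)
    (fun t => by rw [natDegree_taylor]; exact hd t) (by simpa using hne0) _ hflat (by
      filter_upwards [hφ] with t ht
      rw [taylor_eval, sub_add_cancel, ht, mul_zero])
  refine hψ.congr ?_
  filter_upwards [hfin] with t ht
  linarith

end

section
open Filter Topology Asymptotics Polynomial

lemma derivative_taylor' (h : ℝ) (q : ℝ[X]) :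
    derivative (taylor h q) = taylor h (derivative q) := by
  simp [taylor_apply, derivative_comp]

lemma iterate_derivative_taylor' (h : ℝ) (q : ℝ[X]) (e : ℕ) :
    derivative^[e] (taylor h q) = taylor h (derivative^[e] q) := by
  induction e generalizing q with
  | zero => rfl
  | succ e ih => rw [Function.iterate_succ_apply, derivative_taylor', ih,
      Function.iterate_succ_apply]

lemma interval_estimate (e : ℕ) : ∃ K : ℝ, 0 < K ∧ ∀ (q : ℝ[X]) (a b ε : ℝ), a ≤ b →
    (∀ y ∈ Set.Icc a b, |q.eval y| ≤ ε) →
    ∃ ξ ∈ Set.Icc a b, |(derivative^[e] q).eval ξ| * (b - a) ^ e ≤ K * ε := by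
  induction e with
  | zero =>
    refine ⟨1, one_pos, fun q a b ε hab h => ⟨a, Set.left_mem_Icc.2 hab, ?_⟩⟩
    simpa using h a (Set.left_mem_Icc.2 hab)
  | succ e ih =>
    obtain ⟨K, hK, ih⟩ := ih
    refine ⟨2 ^ (e + 2) * K, by positivity, fun q a b ε hab h => ?_⟩
    have hε : 0 ≤ ε := (abs_nonneg _).trans (h a (Set.left_mem_Icc.2 hab))
    rcases hab.eq_or_lt with rfl | hab
    · refine ⟨a, by simp, ?_⟩
      simp only [sub_self, ne_eq, Nat.add_eq_zero_iff, one_ne_zero, and_false, not_false_eq_true,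
        zero_pow, mul_zero]
      positivity
    obtain ⟨h', hh⟩ : ∃ h', h' = (b - a) / 2 := ⟨_, rfl⟩
    have hpos : 0 < h' := by rw [hh]; linarith
    have hb : b = a + 2 * h' := by rw [hh]; ring
    obtain ⟨ξ, hξ, hle⟩ := ih (taylor h' q - q) a (a + h') (2 * ε) (by linarith) (by
      intro y hy
      rw [eval_sub, taylor_eval]
      have h1 := h (y + h') ⟨by linarith [hy.1], by linarith [hy.2]⟩
      have h2 := h y ⟨by linarith [hy.1], by linarith [hy.2]⟩
      calc _ ≤ |q.eval (y + h')| + |q.eval y| := abs_sub _ _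
        _ ≤ _ := by linarith)
    rw [iterate_derivative_sub, iterate_derivative_taylor', eval_sub, taylor_eval] at hle
    obtain ⟨η, hη, hηe⟩ := exists_deriv_eq_slope (fun y => (derivative^[e] q).eval y)
      (show ξ < ξ + h' by linarith) (Polynomial.continuousOn _)
      (Polynomial.differentiableOn _)
    rw [Polynomial.deriv, ← Function.iterate_succ_apply' derivative, eq_div_iff (by linarith)] at hηe
    refine ⟨η, ⟨by linarith [hη.1, hξ.1], by linarith [hη.2, hξ.2]⟩, ?_⟩
    rw [← hηe, abs_mul, add_sub_cancel_left, add_sub_cancel_left, abs_of_pos hpos] at hle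
    have : b - a = 2 * h' := by linarith
    rw [this]
    calc _ = 2 ^ (e + 1) * (|(derivative^[e + 1] q).eval η| * h' * h' ^ e) := by ring
      _ ≤ 2 ^ (e + 1) * (K * (2 * ε)) := by gcongr
      _ = _ := by ring

/-- the tail polynomial -/
noncomputable def Wt (D : ℕ) (T : ℕ → ℝ → ℝ[X]) (t s : ℝ) : ℝ[X] :=
  ∑ j ∈ Finset.range D, C (s ^ j) * T (j + 1) t

lemma Wt_bdd {D : ℕ} {T : ℕ → ℝ → ℝ[X]} (hT : ∀ j, AP (T j)) {α : Type*} {l : Filter α}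
    {t s y : α → ℝ} {y0 : ℝ} (ht : Tendsto t l (𝓝 0)) (hs : Tendsto s l (𝓝 0))
    (hy : Tendsto y l (𝓝 y0)) :
    (fun a => (Wt D T (t a) (s a)).eval (y a)) =O[l] (fun _ => (1 : ℝ)) := by
  simp only [Wt, eval_finsetSum, eval_mul, eval_C]
  refine IsBigO.fun_sum fun j _ => ?_
  have h1 : (fun a => s a ^ j) =O[l] (fun _ => (1 : ℝ)) := (hs.pow j).isBigO_one ℝ
  simpa using h1.mul ((hT (j + 1)).bdd_eval ht hy)

lemma pow_tendsto_zero' {N : ℕ} (hN : 0 < N) : Tendsto (fun t : ℝ => t ^ N) (𝓝 0) (𝓝 0) :=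
  tendsto_zero_of_isBigO_pow hN (isBigO_refl _ _)

lemma ne_zero_along {D : ℕ} {T : ℕ → ℝ → ℝ[X]} (hT : ∀ j, AP (T j))
    (h0 : ¬ ∀ᶠ t in 𝓝 0, T 0 t = 0) : ∃ N0 : ℕ, ∀ N ≥ N0, ∀ᶠ t in 𝓝[≠] (0 : ℝ),
      T 0 t + C (t ^ N) * Wt D T t (t ^ N) ≠ 0 := by
  obtain ⟨m, R, hR, hR0, hTR⟩ := (hT 0).exists_factor h0
  obtain ⟨y, hy⟩ : ∃ y, (R 0).eval y ≠ 0 := by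
    by_contra! h
    exact hR0 (Polynomial.funext (by simpa using h))
  refine ⟨m + 1, fun N hN => ?_⟩
  have hev : ∀ᶠ t in 𝓝 (0 : ℝ), (T 0 t).eval y = t ^ m * (R t).eval y := by
    filter_upwards [hTR] with t ht
    rw [ht]; simp
  obtain ⟨c, hc, hlow⟩ := not_isBigO_of_factor (hR.analyticAt_eval analyticAt_const) hy hev
  have h1 := (pow_isBigO_pow' hN).mul (Wt_bdd (D := D) hT (y := fun _ => y) tendsto_id
    (pow_tendsto_zero' (show 0 < N by omega)) tendsto_const_nhds)
  simp only [mul_one, id] at h1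
  filter_upwards [(lower_bound_perturb hc hlow h1).filter_mono nhdsWithin_le_nhds,
    self_mem_nhdsWithin] with t h2 h3 h4
  have h3 : 0 < |t| := abs_pos.2 h3
  have h5 := congrArg (fun q => q.eval y) h4
  simp only [eval_add, eval_mul, eval_C, eval_zero] at h5
  rw [h5, abs_zero] at h2
  have : 0 < c / 2 * |t| ^ m := by positivity
  linarith

lemma close_along {D : ℕ} {T : ℕ → ℝ → ℝ[X]} (hT : ∀ j, AP (T j))
    (h0 : ¬ ∀ᶠ t in 𝓝 0, T 0 t = 0) {G : ℝ → ℝ → ℝ}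
    (hG0 : ContinuousAt (fun x : ℝ × ℝ => G x.1 x.2) (0, 0)) (hG : ∀ t, Continuous (G t))
    (hrel : ∀ᶠ t in 𝓝 (0 : ℝ), ∀ s, (T 0 t + C s * Wt D T t s).eval (G t s) = 0) (M : ℕ) :
    ∃ N0 : ℕ, ∀ N ≥ N0, (fun t => G t 0 - G t (t ^ N)) =O[𝓝 0] (fun t : ℝ => t ^ M) := by
  obtain ⟨m, R, hR, hR0, hTR⟩ := (hT 0).exists_factor h0
  set e := (R 0).natDegree with he
  set y0 := G 0 0 with hy0
  have hfst : Tendsto (fun x : ℝ × ℝ => x.1) (𝓝 (0, 0)) (𝓝 0) := continuous_fst.continuousAt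
  have hsnd : Tendsto (fun x : ℝ × ℝ => x.2) (𝓝 (0, 0)) (𝓝 0) := continuous_snd.continuousAt
  have hGt : Tendsto (fun x : ℝ × ℝ => G x.1 x.2) (𝓝 (0, 0)) (𝓝 y0) := hG0
  obtain ⟨B, hB0, hB⟩ := (Wt_bdd (D := D) hT hfst hsnd hGt).exists_pos
  replace hB := hB.bound
  obtain ⟨c, hc0, hc⟩ : ∃ c > 0, ∀ᶠ x : ℝ × ℝ in 𝓝 (0, 0),
      c < |(derivative^[e] (R x.1)).eval (G x.1 x.2)| := by
    have h1 : Tendsto (fun x : ℝ × ℝ => |(derivative^[e] (R x.1)).eval (G x.1 x.2)|) (𝓝 (0, 0))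
        (𝓝 |(derivative^[e] (R 0)).eval y0|) :=
      (((hR.iterate_derivative e).analyticAt_eval₂ y0).continuousAt.tendsto.comp
        (hfst.prodMk_nhds hGt)).abs
    have h2 : (derivative^[e] (R 0)).eval y0 ≠ 0 := by
      have h3 : (derivative^[e] (R 0)).natDegree ≤ 0 :=
        (natDegree_iterate_derivative _ _).trans (by omega)
      rw [eq_C_of_natDegree_le_zero h3, eval_C, coeff_iterate_derivative, zero_add]
      simp [he, hR0, Nat.factorial_ne_zero, Nat.descFactorial_self]
    exact ⟨_, half_pos (abs_pos.2 h2), h1.eventually (lt_mem_nhds (half_lt_self (abs_pos.2 h2)))⟩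
  have hd : ∀ᶠ x : ℝ × ℝ in 𝓝 (0, 0), |G x.1 x.2 - y0| < 1 / 2 := by
    have := Metric.tendsto_nhds.1 hGt (1 / 2) (by norm_num)
    simpa [Real.dist_eq] using this
  obtain ⟨δ, hδ, hbox⟩ := Metric.eventually_nhds_iff.1 (hB.and (hc.and hd))
  obtain ⟨K, hK, hest⟩ := interval_estimate e
  refine ⟨m + (M * (e + 1) + 1), fun N hN => ?_⟩
  set C1 := max 1 (K * B / c) with hC1
  have hC1pos : 1 ≤ C1 := le_max_left _ _
  refine IsBigO.of_bound C1 ?_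
  have hsmall : ∀ᶠ t in 𝓝 (0 : ℝ), |t| < δ ∧ |t| < 1 := by
    have h1 : ∀ r > 0, ∀ᶠ t in 𝓝 (0 : ℝ), |t| < r := by
      intro r hr
      have := Metric.eventually_nhds_iff.2 ⟨r, hr, fun (y : ℝ) (hy : dist y 0 < r) => hy⟩
      simpa [Real.dist_eq] using this
    exact (h1 δ hδ).and (h1 1 one_pos)
  filter_upwards [hsmall, hrel, hTR] with t hts hrelt hTRt
  by_cases ht0 : t = 0
  · subst ht0
    rw [zero_pow (by omega)]
    simp only [sub_self, norm_zero]
    positivity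
  have htp : 0 < |t| := abs_pos.2 ht0
  have hbox' : ∀ s, |s| ≤ |t| ^ N → |(Wt D T t s).eval (G t s)| ≤ B ∧
      c < |(derivative^[e] (R t)).eval (G t s)| ∧ |G t s - y0| < 1 / 2 := by
    intro s hs
    have hsδ : |s| < δ := by
      refine (hs.trans ?_).trans_lt hts.1
      exact pow_le_of_le_one (abs_nonneg _) hts.2.le (by omega)
    have := hbox (y := (t, s)) (by simp [Prod.dist_eq, Real.dist_eq, hts.1, hsδ])
    simpa using this
  have himg : ∀ y ∈ Set.uIcc (G t 0) (G t (t ^ N)), ∃ s, |s| ≤ |t| ^ N ∧ G t s = y := by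
    intro y hy
    obtain ⟨s, hs, rfl⟩ := intermediate_value_uIcc (hG t).continuousOn hy
    refine ⟨s, ?_, rfl⟩
    have := Set.abs_sub_left_of_mem_uIcc hs
    simpa using this
  have hRbd : ∀ y ∈ Set.uIcc (G t 0) (G t (t ^ N)), |(R t).eval y| ≤ B * |t| ^ (N - m) := by
    intro y hy
    obtain ⟨s, hs, rfl⟩ := himg y hy
    have h1 := hrelt s
    rw [hTRt] at h1
    simp only [eval_add, eval_mul, eval_C] at h1
    have h2 : |t| ^ m * |(R t).eval (G t s)| ≤ |t| ^ m * (B * |t| ^ (N - m)) := by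
      calc |t| ^ m * |(R t).eval (G t s)| = |s * (Wt D T t s).eval (G t s)| := by
            rw [← abs_pow, ← abs_mul, ← abs_neg]
            congr 1
            linarith
        _ ≤ |t| ^ N * B := by
            rw [abs_mul]
            exact mul_le_mul hs (hbox' s hs).1 (abs_nonneg _) (by positivity)
        _ = |t| ^ (m + (N - m)) * B := by rw [Nat.add_sub_cancel' (by omega)]
        _ = _ := by rw [pow_add]; ring
    exact le_of_mul_le_mul_left h2 (by positivity)
  obtain ⟨ξ, hξ, hξe⟩ := hest (R t) _ _ _ inf_le_sup hRbd
  obtain ⟨s, hs, rfl⟩ := himg ξ hξ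
  have hL : G t 0 ⊔ G t (t ^ N) - G t 0 ⊓ G t (t ^ N) = |G t 0 - G t (t ^ N)| := by
    rw [sup_sub_inf_eq_abs_sub, abs_sub_comm]
  rw [hL] at hξe
  set L := |G t 0 - G t (t ^ N)| with hLdef
  have hL0 : 0 ≤ L := abs_nonneg _
  have hL1 : L ≤ 1 := by
    have h1 := (hbox' 0 (by simp)).2.2
    have h2 := (hbox' (t ^ N) (by simp)).2.2
    rw [hLdef]
    rw [abs_lt] at h1 h2
    rw [abs_le]
    constructor <;> linarith
  rw [norm_pow, Real.norm_eq_abs, Real.norm_eq_abs]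
  have h1 : c * L ^ e ≤ K * (B * |t| ^ (N - m)) :=
    (mul_le_mul_of_nonneg_right (hbox' s hs).2.1.le (by positivity)).trans hξe
  have h2 : L ^ e ≤ C1 * |t| ^ (N - m) := by
    have : L ^ e ≤ (K * B / c) * |t| ^ (N - m) := by
      rw [div_mul_eq_mul_div, le_div_iff₀ hc0]
      linarith
    refine this.trans ?_
    gcongr
    exact le_max_right _ _
  have h3 : L ^ (e + 1) ≤ (C1 * |t| ^ M) ^ (e + 1) := by
    calc L ^ (e + 1) ≤ L ^ e := pow_le_pow_of_le_one hL0 hL1 (by omega)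
      _ ≤ C1 * |t| ^ (N - m) := h2
      _ ≤ C1 ^ (e + 1) * |t| ^ (M * (e + 1)) := by
        refine mul_le_mul (le_self_pow₀ hC1pos (by omega)) ?_ (by positivity) (by positivity)
        exact pow_le_pow_of_le_one (abs_nonneg _) hts.2.le (by omega)
      _ = _ := by rw [mul_pow, pow_mul]
  exact le_of_pow_le_pow_left₀ (by omega) (by positivity) h3

end

section
open Filter Topology Asymptotics Polynomial

lemma AP.mvaeval {n : ℕ} {γ : ℝ → (Fin n → ℝ)} (hγ : AnalyticAt ℝ γ 0) (v : Fin n → ℝ)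
    (c : MvPolynomial (Fin n) ℝ) :
    AP (fun t => MvPolynomial.aeval (fun i => Polynomial.C (γ t i) + X * Polynomial.C (v i)) c) := by
  have hγi : ∀ i, AnalyticAt ℝ (fun t => γ t i) 0 := fun i =>
    AnalyticAt.fun_comp (g := fun x : Fin n → ℝ => x i)
      ((ContinuousLinearMap.proj (R := ℝ) (φ := fun _ : Fin n => ℝ) i).analyticAt _) hγ
  induction c using MvPolynomial.induction_on with
  | C a => simpa using AP.const _
  | add p q hp hq => simpa using hp.add hq
  | mul_X p i hp =>
    simp only [map_mul, MvPolynomial.aeval_X]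
    exact hp.mul ((AP.C (hγi i)).add (AP.const _))

lemma mvaeval_eval {n : ℕ} (x v : Fin n → ℝ) (s : ℝ) (c : MvPolynomial (Fin n) ℝ) :
    (MvPolynomial.aeval (fun i => Polynomial.C (x i) + X * Polynomial.C (v i)) c).eval s =
      MvPolynomial.eval (x + s • v) c := by
  induction c using MvPolynomial.induction_on with
  | C a => simp
  | add p q hp hq => rw [map_add, eval_add, hp, hq, map_add]
  | mul_X p i hp =>
    rw [map_mul, eval_mul, hp, map_mul, MvPolynomial.aeval_X, MvPolynomial.eval_X]
    simp only [eval_add, eval_mul, eval_C, eval_X, Pi.add_apply, Pi.smul_apply, smul_eq_mul]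

lemma mv_exists_eval_ne {n : ℕ} {c : MvPolynomial (Fin n) ℝ} (hc : c ≠ 0) :
    ∃ x, MvPolynomial.eval x c ≠ 0 := by
  by_contra! h
  exact hc (MvPolynomial.funext (by simpa using h))

lemma exists_expansion {n : ℕ} {γ : ℝ → (Fin n → ℝ)} (hγ : AnalyticAt ℝ γ 0)
    {P : (MvPolynomial (Fin n) ℝ)[X]} (hP : P ≠ 0) :
    ∃ (v : Fin n → ℝ) (k D : ℕ) (T : ℕ → ℝ → ℝ[X]), (∀ j, AP (T j)) ∧
      (¬ ∀ᶠ t in 𝓝 0, T 0 t = 0) ∧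
      ∀ᶠ t in 𝓝 0, ∀ s, P.map (MvPolynomial.eval (γ t + s • v)) =
        C (s ^ k) * (T 0 t + C s * Wt D T t s) := by
  classical
  obtain ⟨w, hw⟩ := mv_exists_eval_ne (leadingCoeff_ne_zero.2 hP)
  set v := w - γ 0 with hv
  set U : ℕ → ℝ → ℝ[X] := fun i t => MvPolynomial.aeval
    (fun l => Polynomial.C (γ t l) + X * Polynomial.C (v l)) (P.coeff i) with hU
  have hUAP : ∀ i, AP (U i) := fun i => AP.mvaeval hγ v _
  set d := P.natDegree with hd
  set S : ℕ → ℝ → ℝ[X] := fun j t => ∑ i ∈ Finset.range (d + 1), C ((U i t).coeff j) * X ^ i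
    with hS
  have hSAP : ∀ j, AP (S j) := fun j => AP.sum _ fun i _ => (AP.C ((hUAP i).2 j)).mul (AP.const _)
  choose D hD using fun i => (hUAP i).1
  obtain ⟨E, hE⟩ : ∃ E, ∀ i ∈ Finset.range (d + 1), D i ≤ E :=
    ⟨(Finset.range (d + 1)).sup D, fun i hi => Finset.le_sup hi⟩
  have hdeg : ∀ i ∈ Finset.range (d + 1), ∀ t, (U i t).natDegree ≤ E :=
    fun i hi t => (hD i t).trans (hE i hi)
  have hexp : ∀ E' ≥ E + 1, ∀ t s, P.map (MvPolynomial.eval (γ t + s • v)) =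
      ∑ j ∈ Finset.range E', C (s ^ j) * S j t := by
    intro E' hE' t s
    rw [P.as_sum_range_C_mul_X_pow, Polynomial.map_sum]
    simp only [hS, Finset.mul_sum]
    rw [Finset.sum_comm]
    refine Finset.sum_congr rfl fun i hi => ?_
    rw [Polynomial.map_mul, Polynomial.map_pow, Polynomial.map_X, Polynomial.map_C]
    simp only [← mul_assoc, ← Finset.sum_mul, ← C_mul, ← map_sum]
    congr 2
    rw [← mvaeval_eval, eval_eq_sum_range' (n := E') (by have := hdeg i hi t; simp only [hU] at this; omega)]
    refine Finset.sum_congr rfl fun j _ => mul_comm _ _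
  have hex : ∃ k, ¬ ∀ᶠ t in 𝓝 0, S k t = 0 := by
    by_contra! h
    have h1 := (Finset.eventually_all (Finset.range (E + 1))).2 (fun j _ => h j)
    have h2 := h1.self_of_nhds
    have h3 := hexp (E + 1) le_rfl 0 1
    rw [Finset.sum_eq_zero (fun j hj => by rw [h2 j hj, mul_zero])] at h3
    have h4 := congrArg (fun q => q.coeff d) h3
    simp only [coeff_map, coeff_zero, hv, one_smul, add_sub_cancel] at h4
    exact hw h4
  have hk := Nat.find_spec hex
  set k := Nat.find hex with hkdef
  refine ⟨v, k, E + 1, fun j => S (k + j), fun j => hSAP _, hk, ?_⟩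
  have h1 := (Finset.eventually_all (Finset.range k)).2
    (fun j hj => not_not.1 (Nat.find_min hex (Finset.mem_range.1 hj)))
  filter_upwards [h1] with t ht s
  rw [hexp (k + (E + 1 + 1)) (by omega), Finset.sum_range_add,
    Finset.sum_eq_zero (fun j hj => by rw [ht j hj, mul_zero]), zero_add, Finset.sum_range_succ']
  simp only [Wt, mul_add, Finset.mul_sum, pow_add, map_mul]
  rw [add_comm]
  congr 1
  · simp
  · refine Finset.sum_congr rfl fun j _ => ?_
    simp only [pow_one]
    ring

/-- The analytic core. -/
lemma core {n : ℕ} {γ : ℝ → (Fin n → ℝ)} (hγ : AnalyticAt ℝ γ 0)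
    {P : (MvPolynomial (Fin n) ℝ)[X]} (hP : P ≠ 0) {F : (Fin n → ℝ) → ℝ} (hF : Continuous F)
    (hPF : ∀ x, (P.map (MvPolynomial.eval x)).eval (F x) = 0)
    (hcurve : ∀ (v : Fin n → ℝ) (N : ℕ), 0 < N →
      (∀ᶠ t in 𝓝[≠] (0 : ℝ), P.map (MvPolynomial.eval (γ t + t ^ N • v)) ≠ 0) →
      AnalyticAt ℝ (fun t => F (γ t + t ^ N • v)) 0) :
    AnalyticAt ℝ (fun t => F (γ t)) 0 := by
  obtain ⟨v, k, D, T, hT, hT0, hexp⟩ := exists_expansion hγ hP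
  set G : ℝ → ℝ → ℝ := fun t s => F (γ t + s • v) with hGdef
  have hG : ∀ t, Continuous (G t) := fun t => by fun_prop
  have hG0 : ContinuousAt (fun x : ℝ × ℝ => G x.1 x.2) (0, 0) := by
    refine hF.continuousAt.comp (f := fun x : ℝ × ℝ => γ x.1 + x.2 • v) ?_
    refine ContinuousAt.add ?_ (by fun_prop)
    exact ContinuousAt.comp (f := fun x : ℝ × ℝ => x.1) (g := γ) hγ.continuousAt continuousAt_fst
  have hrel : ∀ᶠ t in 𝓝 (0 : ℝ), ∀ s, (T 0 t + C s * Wt D T t s).eval (G t s) = 0 := by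
    filter_upwards [hexp] with t ht
    have hne : ∀ s, s ≠ 0 → (T 0 t + C s * Wt D T t s).eval (G t s) = 0 := by
      intro s hs
      have h1 := hPF (γ t + s • v)
      rw [ht s, eval_mul, eval_C] at h1
      exact (mul_eq_zero.1 h1).resolve_left (pow_ne_zero _ hs)
    have hcont : Continuous (fun s => (T 0 t + C s * Wt D T t s).eval (G t s)) := by
      simp only [Wt, eval_add, eval_mul, eval_C, eval_finsetSum]
      have hc : ∀ q : ℝ[X], Continuous (fun s => q.eval (G t s)) := fun q =>
        q.continuous.comp (hG t)
      refine (hc _).add (continuous_id.mul (continuous_finsetSum _ fun j _ =>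
        (continuous_pow j).mul (hc _)))
    have := Continuous.ext_on (dense_compl_singleton (0 : ℝ)) hcont continuous_const
      (fun s hs => hne s hs)
    exact fun s => congrFun this s
  obtain ⟨N1, hN1⟩ := ne_zero_along (D := D) hT hT0
  refine analytic_of_approx (hT 0) hT0 (φ := fun t => F (γ t)) ?_ fun M => ?_
  · filter_upwards [hrel] with t ht
    simpa [hGdef] using ht 0
  · obtain ⟨N2, hN2⟩ := close_along hT hT0 hG0 hG hrel M
    refine ⟨fun t => F (γ t + t ^ (max N1 N2 + 1) • v), hcurve v _ (by omega) ?_, ?_⟩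
    · filter_upwards [hN1 (max N1 N2 + 1) (by omega), hexp.filter_mono nhdsWithin_le_nhds,
        self_mem_nhdsWithin] with t h1 h2 h3
      rw [h2]
      refine mul_ne_zero ?_ h1
      rw [Ne, C_eq_zero]
      exact pow_ne_zero _ (pow_ne_zero _ h3)
    · simpa [hGdef] using hN2 (max N1 N2 + 1) (by omega)

end

open Filter Topology Asymptotics Polynomial

noncomputable def toPP {n : ℕ} (p : MvPolynomial (Fin (n + 1)) ℝ) : (MvPolynomial (Fin n) ℝ)[X] :=
  MvPolynomial.aeval (Fin.snoc (α := fun _ => (MvPolynomial (Fin n) ℝ)[X])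
    (fun i => C (MvPolynomial.X i)) X) p

lemma toPP_eval {n : ℕ} (p : MvPolynomial (Fin (n + 1)) ℝ) (x : Fin n → ℝ) (y : ℝ) :
    ((toPP p).map (MvPolynomial.eval x)).eval y =
      MvPolynomial.eval (Fin.snoc (α := fun _ => ℝ) x y) p := by
  unfold toPP
  induction p using MvPolynomial.induction_on with
  | C a =>
    rw [MvPolynomial.aeval_C, IsScalarTower.algebraMap_apply ℝ (MvPolynomial (Fin n) ℝ)]
    simp [MvPolynomial.algebraMap_eq, Polynomial.algebraMap_eq]
  | add p q hp hq => rw [map_add, Polynomial.map_add, eval_add, hp, hq, map_add]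
  | mul_X p i hp =>
    rw [map_mul, Polynomial.map_mul, eval_mul, hp, map_mul, MvPolynomial.aeval_X,
      MvPolynomial.eval_X]
    congr 1
    refine Fin.lastCases ?_ (fun j => ?_) i
    · simp
    · simp

lemma toPP_ne_zero {n : ℕ} {p : MvPolynomial (Fin (n + 1)) ℝ} (hp : p ≠ 0) : toPP p ≠ 0 := by
  obtain ⟨v, hv⟩ := mv_exists_eval_ne hp
  intro h
  have := toPP_eval p (Fin.init v) (v (Fin.last n))
  rw [h, Fin.snoc_init_self] at this
  simp at this
  exact hv this.symm

lemma exists_rel {n : ℕ} {f : (Fin n → ℝ) → ℝ} (hf : IsSemialgebraicFun f) :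
    ∃ P : (MvPolynomial (Fin n) ℝ)[X], P ≠ 0 ∧
      ∀ x, (P.map (MvPolynomial.eval x)).eval (f x) = 0 := by
  classical
  obtain ⟨k, p, r, q, h⟩ := hf
  refine ⟨toPP (∏ i, if p i = 0 then 1 else p i), toPP_ne_zero ?_, fun x => ?_⟩
  · rw [Finset.prod_ne_zero_iff]
    intro i _
    split_ifs with h0
    · exact one_ne_zero
    · exact h0
  rw [toPP_eval, map_prod]
  have hx : Fin.snoc (α := fun _ => ℝ) x (f x) ∈
      {v : Fin (n + 1) → ℝ | v (Fin.last n) = f (Fin.init v)} := by simp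
  rw [h] at hx
  obtain ⟨i, hi⟩ := Set.mem_iUnion.1 hx
  refine Finset.prod_eq_zero (Finset.mem_univ i) ?_
  have hpi : p i ≠ 0 := by
    intro h0
    have hc : Continuous (fun y : ℝ => (Fin.snoc (α := fun _ => ℝ) x y : Fin (n + 1) → ℝ)) := by
      refine continuous_pi fun l => ?_
      refine Fin.lastCases ?_ (fun j => ?_) l
      · simpa using continuous_id'
      · simpa using continuous_const
    have hopen : IsOpen {y : ℝ | ∀ j, 0 < MvPolynomial.eval
        (Fin.snoc (α := fun _ => ℝ) x y : Fin (n + 1) → ℝ) (q i j)} := by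
      simp only [Set.ofPred_forall]
      exact isOpen_iInter_of_finite fun j =>
        isOpen_lt continuous_const ((MvPolynomial.continuous_eval _).comp hc)
    have hsub : {y : ℝ | ∀ j, 0 < MvPolynomial.eval
        (Fin.snoc (α := fun _ => ℝ) x y : Fin (n + 1) → ℝ) (q i j)} ⊆ {f x} := by
      intro y hy
      have : Fin.snoc (α := fun _ => ℝ) x y ∈
          {v : Fin (n + 1) → ℝ | v (Fin.last n) = f (Fin.init v)} := by
        rw [h]
        exact Set.mem_iUnion.2 ⟨i, by simp [h0], hy⟩
      simpa using this
    have hi2 := interior_mono hsub (mem_interior_iff_mem_nhds.2 (hopen.mem_nhds hi.2))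
    simp at hi2
  rw [if_neg hpi]
  exact hi.1

lemma exists_nonvanishing {n : ℕ} {g : (Fin n → ℝ) → ℝ} (hg : IsSemialgebraicFun g)
    (hnd : IsNowhereDense {x | g x = 0}) :
    ∃ h : MvPolynomial (Fin n) ℝ, h ≠ 0 ∧ ∀ x, MvPolynomial.eval x h ≠ 0 → g x ≠ 0 := by
  classical
  obtain ⟨k, p, r, q, h⟩ := hg
  let p' : Fin k → MvPolynomial (Fin n) ℝ := fun i => (toPP (p i)).eval 0
  have hp' : ∀ i x, MvPolynomial.eval x (p' i) =
      MvPolynomial.eval (Fin.snoc (α := fun _ => ℝ) x 0) (p i) := by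
    intro i x
    rw [← toPP_eval]
    have := Polynomial.eval_map_apply (f := MvPolynomial.eval x) (p := toPP (p i)) 0
    rw [map_zero] at this
    exact this.symm
  refine ⟨∏ i, if p' i = 0 then 1 else p' i, ?_, fun x hx hgx => hx ?_⟩
  · rw [Finset.prod_ne_zero_iff]
    intro i _
    split_ifs with h0
    · exact one_ne_zero
    · exact h0
  rw [map_prod]
  have hx : Fin.snoc (α := fun _ => ℝ) x 0 ∈
      {v : Fin (n + 1) → ℝ | v (Fin.last n) = g (Fin.init v)} := by simp [hgx]
  rw [h] at hx
  obtain ⟨i, hi⟩ := Set.mem_iUnion.1 hx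
  refine Finset.prod_eq_zero (Finset.mem_univ i) ?_
  have hpi : p' i ≠ 0 := by
    intro h0
    have hc : Continuous (fun x : Fin n → ℝ =>
        (Fin.snoc (α := fun _ => ℝ) x 0 : Fin (n + 1) → ℝ)) := by
      refine continuous_pi fun l => ?_
      refine Fin.lastCases ?_ (fun j => ?_) l
      · simpa using continuous_const
      · simpa using continuous_apply j
    have hopen : IsOpen {x : Fin n → ℝ | ∀ j, 0 < MvPolynomial.eval
        (Fin.snoc (α := fun _ => ℝ) x 0 : Fin (n + 1) → ℝ) (q i j)} := by
      simp only [Set.ofPred_forall]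
      exact isOpen_iInter_of_finite fun j =>
        isOpen_lt continuous_const ((MvPolynomial.continuous_eval _).comp hc)
    have hsub : {x : Fin n → ℝ | ∀ j, 0 < MvPolynomial.eval
        (Fin.snoc (α := fun _ => ℝ) x 0 : Fin (n + 1) → ℝ) (q i j)} ⊆ {x | g x = 0} := by
      intro y hy
      have : Fin.snoc (α := fun _ => ℝ) y 0 ∈
          {v : Fin (n + 1) → ℝ | v (Fin.last n) = g (Fin.init v)} := by
        rw [h]
        exact Set.mem_iUnion.2 ⟨i, by rw [← hp', h0, map_zero], hy⟩
      simpa using (show (0 : ℝ) = g y by simpa using this).symm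
    have hi2 := interior_mono (hsub.trans subset_closure)
      (mem_interior_iff_mem_nhds.2 (hopen.mem_nhds hi.2))
    rw [hnd] at hi2
    exact hi2
  rw [if_neg hpi, hp']
  exact hi.1

lemma exists_rel_quot {n : ℕ} {f g : (Fin n → ℝ) → ℝ}
    (hf : ∃ P : (MvPolynomial (Fin n) ℝ)[X], P ≠ 0 ∧
      ∀ x, (P.map (MvPolynomial.eval x)).eval (f x) = 0)
    (hg : ∃ P : (MvPolynomial (Fin n) ℝ)[X], P ≠ 0 ∧
      ∀ x, (P.map (MvPolynomial.eval x)).eval (g x) = 0) :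
    ∃ P : (MvPolynomial (Fin n) ℝ)[X], P ≠ 0 ∧
      ∀ x, (P.map (MvPolynomial.eval x)).eval (f x / g x) = 0 := by
  let φ : MvPolynomial (Fin n) ℝ →+* ((Fin n → ℝ) → ℝ) := RingHom.pi fun x => MvPolynomial.eval x
  letI : Algebra (MvPolynomial (Fin n) ℝ) ((Fin n → ℝ) → ℝ) := φ.toAlgebra
  have haev : ∀ (P : (MvPolynomial (Fin n) ℝ)[X]) (a : (Fin n → ℝ) → ℝ) (x : Fin n → ℝ),
      (aeval a P) x = (P.map (MvPolynomial.eval x)).eval (a x) := by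
    intro P a x
    have h1 := Polynomial.hom_eval₂ P φ (Pi.evalRingHom (fun _ : Fin n → ℝ => ℝ) x) a
    rw [eval_map]
    exact h1
  have hiff : ∀ a : (Fin n → ℝ) → ℝ, IsAlgebraic (MvPolynomial (Fin n) ℝ) a ↔
      ∃ P : (MvPolynomial (Fin n) ℝ)[X], P ≠ 0 ∧
        ∀ x, (P.map (MvPolynomial.eval x)).eval (a x) = 0 := by
    intro a
    simp only [IsAlgebraic, ← haev, funext_iff, Pi.zero_apply]
  have hginv : ∃ P : (MvPolynomial (Fin n) ℝ)[X], P ≠ 0 ∧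
      ∀ x, (P.map (MvPolynomial.eval x)).eval ((fun x => (g x)⁻¹) x) = 0 := by
    obtain ⟨P, hP, hPg⟩ := hg
    refine ⟨X * P.reverse, mul_ne_zero X_ne_zero (by simpa using hP), fun x => ?_⟩
    rw [Polynomial.map_mul, eval_mul, Polynomial.map_X, eval_X]
    by_cases hx : g x = 0
    · simp [hx]
    · have h1 := hPg x
      rw [eval_map] at h1 ⊢
      have : Invertible (g x) := invertibleOfNonzero hx
      have h2 := eval₂_reverse_eq_zero_iff (MvPolynomial.eval x) (g x) P
      rw [invOf_eq_inv] at h2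
      rw [h2.2 h1, mul_zero]
  have := ((hiff f).2 hf).mul ((hiff _).2 hginv)
  simpa [div_eq_mul_inv] using (hiff _).1 this

/-- If `f, g : ℝⁿ → ℝ` (`n ≥ 1`) are semialgebraic arc-analytic functions, the zero locus of
`g` is nowhere dense, and `f/g` extends to a continuous function `F` on `ℝⁿ`, then `F` is
arc-analytic. -/
theorem arcAnalytic_of_continuous_quotient {n : ℕ} (hn : 1 ≤ n)
    (f g : (Fin n → ℝ) → ℝ)
    (hf_sa : IsSemialgebraicFun f) (hg_sa : IsSemialgebraicFun g)
    (hf_aa : ArcAnalytic f) (hg_aa : ArcAnalytic g)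
    (hg_nd : IsNowhereDense {x | g x = 0})
    (F : (Fin n → ℝ) → ℝ) (hF : Continuous F)
    (hFfg : ∀ x, g x ≠ 0 → F x = f x / g x) :
    ArcAnalytic F := by
  classical
  obtain ⟨P0, hP0, hP0F⟩ := exists_rel_quot (exists_rel hf_sa) (exists_rel hg_sa)
  obtain ⟨h, hh, hhg⟩ := exists_nonvanishing hg_sa hg_nd
  have hdense : Dense {x | g x ≠ 0} := by
    have h1 : interior {x | g x = 0} = ∅ :=
      Set.subset_empty_iff.1 ((interior_mono subset_closure).trans hg_nd.subset)
    exact interior_eq_empty_iff_dense_compl.1 h1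
  -- the relation for `F`
  have hF0 : ∀ x, (P0.map (MvPolynomial.eval x)).eval (F x) = 0 := by
    have hcont : Continuous (fun x => (P0.map (MvPolynomial.eval x)).eval (F x)) := by
      simp only [eval_map, eval₂_eq_sum_range]
      exact continuous_finsetSum _ fun j _ => (MvPolynomial.continuous_eval _).mul (hF.pow j)
    have := Continuous.ext_on hdense hcont (continuous_const (y := (0 : ℝ))) (fun x hx => by
      simp only [hFfg x hx, hP0F x])
    exact fun x => congrFun this x
  intro γ hγ t0 ht0
  have hshift : AnalyticAt ℝ (fun t : ℝ => t0 + t) 0 := analyticAt_const.add analyticAt_id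
  have hγ0 : AnalyticAt ℝ (fun t => γ (t0 + t)) 0 :=
    AnalyticAt.fun_comp (g := γ) (f := fun t : ℝ => t0 + t) (by simpa using hγ t0 ht0) hshift
  have hcore := core hγ0 (P := C h * P0) (mul_ne_zero (by simpa using hh) hP0) hF
    (fun x => by rw [Polynomial.map_mul, eval_mul, hF0 x, mul_zero]) ?_
  · have h1 : AnalyticAt ℝ (fun t : ℝ => t - t0) t0 := analyticAt_id.sub analyticAt_const
    have := AnalyticAt.fun_comp (g := fun t => F (γ (t0 + t))) (f := fun t : ℝ => t - t0)
      (x := t0) (by simpa using hcore) h1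
    simpa [Function.comp_def] using this
  · intro v N hN hev
    set γN : ℝ → (Fin n → ℝ) := fun t => γ t + (t - t0) ^ N • v with hγN
    have hγNa : AnalyticOnNhd ℝ γN (Set.Ioo (-1) 1) := fun t ht =>
      (hγ t ht).add (((analyticAt_id.sub analyticAt_const).pow N).smul analyticAt_const)
    have hsh : ∀ {a : (Fin n → ℝ) → ℝ}, ArcAnalytic a →
        AnalyticAt ℝ (fun t => a (γ (t0 + t) + t ^ N • v)) 0 := by
      intro a ha
      have := AnalyticAt.fun_comp (g := a ∘ γN) (f := fun t : ℝ => t0 + t) (x := 0)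
        (by simpa using ha γN hγNa t0 ht0) hshift
      simpa [Function.comp_def, hγN] using this
    have hmer : MeromorphicAt (fun t => F (γ (t0 + t) + t ^ N • v)) 0 := by
      refine ((hsh hf_aa).meromorphicAt.div (hsh hg_aa).meromorphicAt).congr ?_
      filter_upwards [hev] with t ht
      rw [Pi.div_apply, hFfg]
      apply hhg
      intro h0
      apply ht
      rw [Polynomial.map_mul, Polynomial.map_C, h0, map_zero, zero_mul]
    refine hmer.analyticAt ?_
    refine ContinuousAt.comp (f := fun t => γ (t0 + t) + t ^ N • v) hF.continuousAt ?_
    exact hγ0.continuousAt.add (by fun_prop)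
end

section
/- The graph of the function f : ℝ² → ℝ, f(x,y) = √(x⁴ + y⁴), regarded as a subset of ℝ³, does not belong to the Boolean algebra of subsets of ℝ³ generated by the zero sets of Nash functions on ℝ³ (i.e., the graph of f is not Nash constructible in ℝ³). -/
/-- A *Nash function* on `ℝⁿ` is a real-analytic function `ℝⁿ → ℝ` whose graph is a
semialgebraic subset of `ℝⁿ⁺¹`. -/
def IsNashFunction {n : ℕ} (f : (Fin n → ℝ) → ℝ) : Prop :=
  AnalyticOnNhd ℝ f Set.univ ∧
    IsSemialgebraic {v : Fin (n + 1) → ℝ | v (Fin.last n) = f (Fin.init v)}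

/-- The *Nash constructible* subsets of `ℝⁿ`: the Boolean algebra of sets generated by the
zero sets of Nash functions on `ℝⁿ`, i.e. the smallest collection containing all Nash sets
and closed under finite unions, finite intersections, and complements. -/
inductive IsNashConstructible {n : ℕ} : Set (Fin n → ℝ) → Prop
  | nash (f : (Fin n → ℝ) → ℝ) (hf : IsNashFunction f) :
      IsNashConstructible {x | f x = 0}
  | union (S T : Set (Fin n → ℝ)) :
      IsNashConstructible S → IsNashConstructible T → IsNashConstructible (S ∪ T)
  | inter (S T : Set (Fin n → ℝ)) :
      IsNashConstructible S → IsNashConstructible T → IsNashConstructible (S ∩ T)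
  | compl (S : Set (Fin n → ℝ)) :
      IsNashConstructible S → IsNashConstructible Sᶜ

open Filter Topology Asymptotics in
lemma aux_poly_dvd (q : Polynomial ℝ) (N : ℕ)
    (h : (fun x : ℝ => q.eval x) =O[𝓝[≠] 0] fun x => x ^ N) : Polynomial.X ^ N ∣ q := by
  have key : ∀ k ≤ N, Polynomial.X ^ k ∣ q := by
    intro k
    induction k with
    | zero => intro _; simp
    | succ k ih =>
      intro hk
      obtain ⟨r, rfl⟩ := ih (by omega)
      rw [pow_succ]
      apply mul_dvd_mul_left
      rw [Polynomial.X_dvd_iff, Polynomial.coeff_zero_eq_eval_zero]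
      have h1 : (fun x : ℝ => r.eval x) =O[𝓝[≠] 0] fun x => x ^ (N - k) := by
        obtain ⟨C, hC⟩ := h.bound
        apply IsBigO.of_bound C
        filter_upwards [hC, self_mem_nhdsWithin] with x hx hx0
        have hx0 : x ≠ 0 := hx0
        have e : x ^ N = x ^ k * x ^ (N - k) := by rw [← pow_add]; congr 1; omega
        rw [e, Polynomial.eval_mul, Polynomial.eval_pow, Polynomial.eval_X, norm_mul, norm_mul] at hx
        have : 0 < ‖x ^ k‖ := norm_pos_iff.2 (pow_ne_zero _ hx0)
        have hx' : ‖x ^ k‖ * ‖r.eval x‖ ≤ ‖x ^ k‖ * (C * ‖x ^ (N - k)‖) := by linarith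
        exact le_of_mul_le_mul_left hx' this
      have h2 : Tendsto (fun x : ℝ => x ^ (N - k)) (𝓝[≠] 0) (𝓝 0) := by
        have : Tendsto (fun x : ℝ => x ^ (N - k)) (𝓝 0) (𝓝 (0 ^ (N - k))) :=
          (continuous_pow _).tendsto 0
        rw [zero_pow (by omega)] at this
        exact this.mono_left nhdsWithin_le_nhds
      have h3 := h1.trans_tendsto h2
      have h4 : Tendsto (fun x : ℝ => r.eval x) (𝓝[≠] 0) (𝓝 (r.eval 0)) :=
        (r.continuous.tendsto 0).mono_left nhdsWithin_le_nhds
      exact tendsto_nhds_unique h4 h3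
  exact key N le_rfl

lemma aux_nonsq (a b : Polynomial ℝ) (h : a ^ 2 = (1 + Polynomial.X ^ 4) * b ^ 2) :
    a = 0 ∧ b = 0 := by
  by_cases hb : b = 0
  · subst hb; simp at h; exact ⟨h, rfl⟩
  exfalso
  have hd : b ∣ a := by
    rw [← IsIntegrallyClosed.pow_dvd_pow_iff (n := 2) (by norm_num)]
    exact ⟨_, by rw [h, mul_comm]⟩
  obtain ⟨c, rfl⟩ := hd
  have hc : c ^ 2 = 1 + Polynomial.X ^ 4 := by
    have : b ^ 2 * c ^ 2 = b ^ 2 * (1 + Polynomial.X ^ 4) := by rw [← mul_pow, h, mul_comm]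
    exact mul_left_cancel₀ (pow_ne_zero 2 hb) this
  have h1 : (c - Polynomial.X ^ 2) * (c + Polynomial.X ^ 2) = 1 := by linear_combination hc
  have u1 := Polynomial.isUnit_iff.1 (IsUnit.of_mul_eq_one _ h1)
  have u2 := Polynomial.isUnit_iff.1 (IsUnit.of_mul_eq_one_right _ h1)
  obtain ⟨r1, -, e1⟩ := u1
  obtain ⟨r2, -, e2⟩ := u2
  have e3 : Polynomial.C (r2 - r1) = 2 * Polynomial.X ^ 2 := by
    rw [Polynomial.C_sub, e1, e2]; ring
  have e4 := congrArg (Polynomial.eval 0) e3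
  have e5 := congrArg (Polynomial.eval 1) e3
  simp at e4 e5
  linarith

noncomputable def auxS (t : ℝ) : ℝ := Real.sqrt (1 + t ^ 4)

lemma auxS_sq (t : ℝ) : auxS t ^ 2 = 1 + t ^ 4 := Real.sq_sqrt (by positivity)

noncomputable def auxG (σ t x : ℝ) : Fin 3 → ℝ := ![x, t * x, σ * auxS t * x ^ 2]

lemma aux_decomp (Q : MvPolynomial (Fin 3) ℝ) :
    ∃ a b : Polynomial (Polynomial ℝ), ∀ σ t x : ℝ, σ ^ 2 = 1 →
      MvPolynomial.eval (auxG σ t x) Q =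
        (a.map (Polynomial.evalRingHom t)).eval x
          + σ * auxS t * (b.map (Polynomial.evalRingHom t)).eval x := by
  induction Q using MvPolynomial.induction_on with
  | C c => exact ⟨Polynomial.C (Polynomial.C c), 0, by intros; simp⟩
  | add p q hp hq =>
    obtain ⟨a, b, h⟩ := hp
    obtain ⟨a', b', h'⟩ := hq
    refine ⟨a + a', b + b', fun σ t x hσ => ?_⟩
    rw [map_add, h σ t x hσ, h' σ t x hσ]
    simp only [Polynomial.map_add, Polynomial.eval_add]
    ring
  | mul_X p i hp =>
    obtain ⟨a, b, h⟩ := hp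
    fin_cases i
    · refine ⟨a * Polynomial.X, b * Polynomial.X, fun σ t x hσ => ?_⟩
      rw [map_mul, h σ t x hσ]
      simp [auxG]
      ring
    · refine ⟨a * (Polynomial.C Polynomial.X * Polynomial.X),
        b * (Polynomial.C Polynomial.X * Polynomial.X), fun σ t x hσ => ?_⟩
      rw [map_mul, h σ t x hσ]
      simp [auxG]
      ring
    · refine ⟨b * (Polynomial.C (1 + Polynomial.X ^ 4) * Polynomial.X ^ 2),
        a * Polynomial.X ^ 2, fun σ t x hσ => ?_⟩
      rw [map_mul, h σ t x hσ]
      have := auxS_sq t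
      simp [auxG]
      generalize Polynomial.eval x (Polynomial.map _ a) = A
      generalize Polynomial.eval x (Polynomial.map _ b) = B
      linear_combination (B * x ^ 2 * σ ^ 2) * this + (B * x ^ 2 * (1 + t ^ 4)) * hσ

lemma aux_taylor_poly (p : FormalMultilinearSeries ℝ (Fin 3 → ℝ) ℝ) (N : ℕ) :
    ∃ Q : MvPolynomial (Fin 3) ℝ, ∀ y, p.partialSum N y = MvPolynomial.eval y Q := by
  refine ⟨∑ k ∈ Finset.range N, ∑ r : Fin k → Fin 3,
    (∏ i, MvPolynomial.X (r i)) * MvPolynomial.C (p k (fun i => Pi.single (r i) 1)), fun y => ?_⟩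
  simp only [FormalMultilinearSeries.partialSum, map_sum, map_mul, map_prod,
    MvPolynomial.eval_X, MvPolynomial.eval_C]
  refine Finset.sum_congr rfl fun k _ => ?_
  have hy : (fun _ : Fin k => y) =
      fun _ => ∑ j : Fin 3, y j • (Pi.single j 1 : Fin 3 → ℝ) := by
    funext _
    exact pi_eq_sum_univ' y
  rw [hy, ContinuousMultilinearMap.map_sum]
  refine Finset.sum_congr rfl fun r _ => ?_
  rw [ContinuousMultilinearMap.map_smul_univ, smul_eq_mul]

lemma auxG_analytic (σ t : ℝ) : AnalyticAt ℝ (auxG σ t) 0 := by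
  unfold auxG
  rw [analyticAt_pi_iff]
  intro i
  fin_cases i <;> simp <;> fun_prop

open Filter Topology Asymptotics in
lemma auxG_bigO (σ t : ℝ) : (auxG σ t) =O[𝓝 0] fun x => x := by
  have h := (auxG_analytic σ t).differentiableAt.isBigO_sub
  have e : auxG σ t 0 = 0 := by
    ext i; fin_cases i <;> simp [auxG]
  simpa [e] using h

open Filter Topology Asymptotics in
lemma aux_main (f : (Fin 3 → ℝ) → ℝ) (hf : AnalyticAt ℝ f 0) (σ σ' : ℝ) (hσ : σ ^ 2 = 1)
    (hσ' : σ' ^ 2 = 1) (hT : {t : ℝ | ∀ᶠ x in 𝓝[≠] 0, f (auxG σ t x) = 0}.Infinite) (t : ℝ) :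
    ∀ᶠ x in 𝓝[≠] 0, f (auxG σ' t x) = 0 := by
  obtain ⟨p, hp⟩ := hf
  have e0 : ∀ σ t, auxG σ t 0 = 0 := by
    intro σ t
    ext i; fin_cases i <;> simp [auxG]
  have hO : ∀ N σ t, (fun x : ℝ => f (auxG σ t x) - p.partialSum N (auxG σ t x))
      =O[𝓝[≠] 0] fun x => x ^ N := by
    intro N σ t
    have h1 := hp.isBigO_sub_partialSum_pow N
    simp only [zero_add] at h1
    have h2 : Tendsto (auxG σ t) (𝓝 0) (𝓝 0) := by
      have := (auxG_analytic σ t).continuousAt.tendsto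
      rwa [e0] at this
    have h3 := h1.comp_tendsto h2
    exact (h3.trans ((auxG_bigO σ t).norm_left.pow N)).mono nhdsWithin_le_nhds
  have hF : ∀ N, (fun x : ℝ => f (auxG σ' t x)) =O[𝓝[≠] 0] fun x => x ^ N := by
    intro N
    obtain ⟨Q, hQ⟩ := aux_taylor_poly p N
    obtain ⟨a, b, hab⟩ := aux_decomp Q
    have hz : ∀ n < N, a.coeff n = 0 ∧ b.coeff n = 0 := by
      intro n hn
      apply aux_nonsq
      apply Polynomial.eq_of_infinite_eval_eq
      refine hT.mono fun u hu => ?_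
      have hu : ∀ᶠ x in 𝓝[≠] 0, f (auxG σ u x) = 0 := hu
      have h1 : (fun x : ℝ => ((a.map (Polynomial.evalRingHom u))
          + Polynomial.C (σ * auxS u) * (b.map (Polynomial.evalRingHom u))).eval x)
          =O[𝓝[≠] 0] fun x => x ^ N := by
        refine (hO N σ u).neg_left.congr' ?_ EventuallyEq.rfl
        filter_upwards [hu] with x hx
        rw [hx, hQ, hab σ u x hσ]
        simp
      have h2 := Polynomial.X_pow_dvd_iff.1 (aux_poly_dvd _ _ h1) n hn
      simp only [Polynomial.coeff_add, Polynomial.coeff_C_mul, Polynomial.coeff_map, Polynomial.coe_evalRingHom] at h2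
      have hs := auxS_sq u
      simp
      generalize Polynomial.eval u (a.coeff n) = A at *
      generalize Polynomial.eval u (b.coeff n) = B at *
      linear_combination (A - σ * auxS u * B) * h2 + σ ^ 2 * B ^ 2 * hs + (1 + u ^ 4) * B ^ 2 * hσ
    have hq : Polynomial.X ^ N ∣ ((a.map (Polynomial.evalRingHom t))
          + Polynomial.C (σ' * auxS t) * (b.map (Polynomial.evalRingHom t))) := by
      rw [Polynomial.X_pow_dvd_iff]
      intro n hn
      simp only [Polynomial.coeff_add, Polynomial.coeff_C_mul, Polynomial.coeff_map, hz n hn, map_zero, mul_zero, add_zero]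
    obtain ⟨r, hr⟩ := hq
    have h5 : (fun x : ℝ => p.partialSum N (auxG σ' t x)) =O[𝓝[≠] 0] fun x => x ^ N := by
      have h6 : (fun x : ℝ => p.partialSum N (auxG σ' t x)) = fun x => x ^ N * r.eval x := by
        funext x
        rw [hQ, hab σ' t x hσ']
        have := congrArg (Polynomial.eval x) hr
        simpa using this
      rw [h6]
      have h7 : (fun x : ℝ => r.eval x) =O[𝓝[≠] 0] fun _ => (1 : ℝ) :=
        ((r.continuous.tendsto 0).isBigO_one ℝ).mono nhdsWithin_le_nhds
      simpa using (isBigO_refl (fun x : ℝ => x ^ N) _).mul h7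
    simpa using (hO N σ' t).add h5
  have hA : AnalyticAt ℝ (fun x => f (auxG σ' t x)) 0 := by
    apply AnalyticAt.fun_comp (f := auxG σ' t) (g := f) _ (auxG_analytic σ' t)
    rw [e0]; exact ⟨p, hp⟩
  by_contra hne
  have hne' : ¬ ∀ᶠ x in 𝓝 (0:ℝ), f (auxG σ' t x) = 0 := fun h =>
    hne (h.filter_mono nhdsWithin_le_nhds)
  obtain ⟨n, g, hg, hg0, hfg⟩ := (hA.exists_eventuallyEq_pow_smul_nonzero_iff).2 hne'
  have h8 : (fun x : ℝ => g x) =O[𝓝[≠] 0] fun x => x := by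
    obtain ⟨C, hC⟩ := (hF (n + 1)).bound
    apply IsBigO.of_bound C
    filter_upwards [hC, self_mem_nhdsWithin, hfg.filter_mono nhdsWithin_le_nhds] with x hx hx0 hxg
    have hx0 : x ≠ 0 := hx0
    rw [hxg, pow_succ, sub_zero, smul_eq_mul, norm_mul, norm_mul] at hx
    have : 0 < ‖x ^ n‖ := norm_pos_iff.2 (pow_ne_zero _ hx0)
    have hx' : ‖x ^ n‖ * ‖g x‖ ≤ ‖x ^ n‖ * (C * ‖x‖) := by linarith
    exact le_of_mul_le_mul_left hx' this
  have h9 : Tendsto g (𝓝[≠] 0) (𝓝 0) :=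
    h8.trans_tendsto (tendsto_id.mono_left nhdsWithin_le_nhds)
  exact hg0 (tendsto_nhds_unique (hg.continuousAt.tendsto.mono_left nhdsWithin_le_nhds) h9)

open Filter Topology in
lemma aux_nash (f : (Fin 3 → ℝ) → ℝ) (hf : AnalyticAt ℝ f 0) :
    ∀ᶠ t in cofinite, ∀ᶠ x in 𝓝[≠] (0:ℝ), (f (auxG 1 t x) = 0 ↔ f (auxG (-1) t x) = 0) := by
  by_cases h1 : {t : ℝ | ∀ᶠ x in 𝓝[≠] 0, f (auxG 1 t x) = 0}.Infinite
  · refine Eventually.of_forall fun t => ?_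
    filter_upwards [aux_main f hf 1 1 (by norm_num) (by norm_num) h1 t,
      aux_main f hf 1 (-1) (by norm_num) (by norm_num) h1 t] with x hx hx'
    simp [hx, hx']
  by_cases h2 : {t : ℝ | ∀ᶠ x in 𝓝[≠] 0, f (auxG (-1) t x) = 0}.Infinite
  · refine Eventually.of_forall fun t => ?_
    filter_upwards [aux_main f hf (-1) 1 (by norm_num) (by norm_num) h2 t,
      aux_main f hf (-1) (-1) (by norm_num) (by norm_num) h2 t] with x hx hx'
    simp [hx, hx']
  rw [Set.not_infinite] at h1 h2
  have e0 : ∀ σ t, auxG σ t 0 = 0 := by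
    intro σ t
    ext i; fin_cases i <;> simp [auxG]
  have hA : ∀ σ t, AnalyticAt ℝ (fun x => f (auxG σ t x)) 0 := by
    intro σ t
    apply AnalyticAt.fun_comp (f := auxG σ t) (g := f) _ (auxG_analytic σ t)
    rw [e0]; exact hf
  filter_upwards [h1.compl_mem_cofinite, h2.compl_mem_cofinite] with t ht1 ht2
  have k : ∀ σ, (¬ ∀ᶠ x in 𝓝[≠] 0, f (auxG σ t x) = 0) →
      ∀ᶠ x in 𝓝[≠] 0, f (auxG σ t x) ≠ 0 := by
    intro σ h
    rcases (hA σ t).eventually_eq_zero_or_eventually_ne_zero with h' | h'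
    · exact absurd (h'.filter_mono nhdsWithin_le_nhds) h
    · exact h'
  filter_upwards [k 1 ht1, k (-1) ht2] with x hx hx'
  simp [hx, hx']

open Filter Topology in
lemma aux_constr (S : Set (Fin 3 → ℝ)) (hS : IsNashConstructible S) :
    ∀ᶠ t in cofinite, ∀ᶠ x in 𝓝[≠] (0:ℝ), (auxG 1 t x ∈ S ↔ auxG (-1) t x ∈ S) := by
  induction hS with
  | nash f hf => exact aux_nash f (hf.1 0 (Set.mem_univ _))
  | union S T _ _ h1 h2 =>
    filter_upwards [h1, h2] with t a1 a2
    filter_upwards [a1, a2] with x b1 b2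
    simp only [Set.mem_union, b1, b2]
  | inter S T _ _ h1 h2 =>
    filter_upwards [h1, h2] with t a1 a2
    filter_upwards [a1, a2] with x b1 b2
    simp only [Set.mem_inter_iff, b1, b2]
  | compl S _ h1 =>
    filter_upwards [h1] with t a1
    filter_upwards [a1] with x b1
    simp only [Set.mem_compl_iff, b1]

/-- The graph of `f(x, y) = √(x⁴ + y⁴)`, regarded as a subset of `ℝ³`, is not Nash
constructible in `ℝ³`. -/
theorem graph_sqrt_not_nashConstructible :
    ¬ IsNashConstructible {v : Fin 3 → ℝ | v 2 = Real.sqrt ((v 0) ^ 4 + (v 1) ^ 4)} := by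
  intro h
  obtain ⟨t, ht⟩ := (aux_constr _ h).exists
  obtain ⟨x, hx, hx0⟩ := (ht.and self_mem_nhdsWithin).exists
  have hx0 : x ≠ 0 := hx0
  have e : Real.sqrt (x ^ 4 + (t * x) ^ 4) = auxS t * x ^ 2 := by
    rw [Real.sqrt_eq_iff_mul_self_eq (by positivity) (by unfold auxS; positivity)]
    linear_combination -(x ^ 4) * auxS_sq t
  have hp : 0 < auxS t * x ^ 2 := by
    have : 0 < auxS t := Real.sqrt_pos.2 (by positivity)
    positivity
  simp [auxG, e] at hx
  linarith
end
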